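/- Let R be a right (or left) noetherian NI-ring, i.e., a noetherian ring in which the set Nil(R) of nilpotent elements forms a two-sided ideal. Then for every n ≥ 1, the full matrix ring M_n(R) is strongly unit nil-clean if and only if R is strongly unit nil-clean. -/

import Mathlib

/-! Write `N` for the ideal of nilpotent elements and `S = R/N`, a reduced left noetherian ring.
The proof goes through the condition that every `x : S` has a unit `u` with `u * x` idempotent;
for a reduced ring this is the same as being strongly unit nil-clean.

* Lifting. If `f : A → B` is surjective with nil kernel, and every element of `B` can be made
  idempotent by a unit, then `A` is strongly unit nil-clean
  (`stronglyUnitNilClean_of_surjective`): units lift along `f`, and an element `y` with `y - y ^ 2`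
  nilpotent is strongly nil-clean. This applies to `R → S`, and also to `M_n(R) → M_n(S)`, since
  by Levitzki's argument matrices over `N` are nilpotent (`matrix_isNilpotent_of_nil`).

* From `R` to `M_n(R)`. In `S` idempotents are central, so that the noetherian condition makes
  every left ideal generated by a central idempotent, and `S` is semisimple
  (`isSemisimpleRing_of_unit_mul_idempotent`). Then so is `M_n(S)`, and by Artin-Wedderburn and
  linear algebra over division rings each of its elements can be made idempotent by a unit.

* From `M_n(R)` to `R`. The quotient `M_n(S)` of `M_n(R)` is also strongly unit nil-clean. If
  `a : S` is a non-zero-divisor, then so is the scalar matrix `a`, which forces the idempotent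
  in its decomposition to be `1`, so that
  `a` is a unit. For arbitrary `a`, the noetherian condition gives `c` with `a * c = 0` and
  `a + c` a non-zero-divisor, hence a unit `v` with `v * a = a ^ 2`; then `v⁻¹ * a` is
  idempotent. -/

/-- An element `x` of a ring is *strongly nil-clean* if `x = e + b` where `e` is an
idempotent, `b` is nilpotent, and `e` and `b` commute. -/
def IsStronglyNilClean {R : Type*} [Ring R] (x : R) : Prop :=
  ∃ e b : R, IsIdempotentElem e ∧ IsNilpotent b ∧ e * b = b * e ∧ x = e + b

/-- A ring `R` is *strongly unit nil-clean* if for every `x : R` there is a unit `u`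
such that `u * x` is strongly nil-clean. -/
def StronglyUnitNilClean (R : Type*) [Ring R] : Prop :=
  ∀ x : R, ∃ u : Rˣ, IsStronglyNilClean ((u : R) * x)

/-- A ring `R` is *unit-regular* if every `a : R` satisfies `a = a * u * a` for some unit `u`. -/
def UnitRegular (R : Type*) [Ring R] : Prop :=
  ∀ a : R, ∃ u : Rˣ, a = a * (u : R) * a

/-- A group is *locally finite* if every finitely generated subgroup is finite. -/
def LocallyFiniteGroup (G : Type*) [Group G] : Prop :=
  ∀ H : Subgroup G, H.FG → (H : Set G).Finite

/-- A subset `T` of a ring is *nilpotent* if there is `n ≥ 1` such that every product of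
`n` elements of `T` is zero. -/
def IsNilpotentSubset {R : Type*} [Ring R] (T : Set R) : Prop :=
  ∃ n : ℕ, 0 < n ∧ ∀ l : List R, (∀ a ∈ l, a ∈ T) → l.length = n → l.prod = 0

/-- A subset `S` of a ring is *locally nilpotent* if the non-unital subring generated by
any finite subset of `S` is nilpotent. -/
def IsLocallyNilpotentSet {R : Type*} [Ring R] (S : Set R) : Prop :=
  ∀ F : Finset R, (F : Set R) ⊆ S →
    IsNilpotentSubset ((NonUnitalSubring.closure (F : Set R) : Set R))

/-- A ring is *NI* if the set of nilpotent elements forms a two-sided ideal. -/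
def IsNIRing (R : Type*) [Ring R] : Prop :=
  ∃ I : TwoSidedIdeal R, ∀ x : R, x ∈ I ↔ IsNilpotent x

/-- A ring is *weakly 2-primal* if its set of nilpotent elements is a two-sided ideal
which is moreover locally nilpotent. -/
def Weakly2Primal (R : Type*) [Ring R] : Prop :=
  IsNIRing R ∧ IsLocallyNilpotentSet {x : R | IsNilpotent x}

open Polynomial in
/-- For `k ≥ 1` the polynomial `1 - (1 - X ^ k) ^ k`, which turns `y` into an idempotent when
`(y - y ^ 2) ^ k = 0`, is congruent to `X` modulo `X - X ^ 2`. -/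
lemma exists_poly_sub_mul {R : Type*} [Ring R] (y : R) (m : ℕ) :
    ∃ q : R, Commute y q ∧ y - (1 - (1 - y ^ (m + 1)) ^ (m + 1)) = (y - y ^ 2) * q := by
  have key : (X - X ^ 2 : ℤ[X]) ∣ X - (1 - (1 - X ^ (m + 1)) ^ (m + 1)) := by
    have h1 : ∀ z : ℤ[X], z - z ^ 2 ∣ z - z ^ (m + 1) := by
      intro z
      have h := sub_dvd_pow_sub_pow (1 : ℤ[X]) z m
      rw [one_pow] at h
      have h2 := mul_dvd_mul_left z h
      convert h2 using 1 <;> ring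
    have h2 : (X - X ^ 2 : ℤ[X]) ∣ (1 - X) - (1 - X ^ (m + 1)) := by
      have := (h1 X).neg_right
      convert this using 1; ring
    have h3 := h2.trans (sub_dvd_pow_sub_pow (1 - X) (1 - X ^ (m + 1) : ℤ[X]) (m + 1))
    have h4 := h1 (1 - X)
    have e : (1 - X : ℤ[X]) - (1 - X) ^ 2 = X - X ^ 2 := by ring
    rw [e] at h4
    have h5 := (dvd_add h3 h4).neg_right
    convert h5 using 1; ring
  obtain ⟨q, hq⟩ := key
  refine ⟨aeval y q, ?_, ?_⟩
  · have := congrArg (aeval y) (mul_comm X q)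
    simpa [Commute, SemiconjBy] using this
  · have := congrArg (aeval y) hq
    simpa using this

lemma isStronglyNilClean_of_isNilpotent_sub_sq {R : Type*} [Ring R] {y : R}
    (h : IsNilpotent (y - y ^ 2)) : IsStronglyNilClean y := by
  obtain ⟨k, hk⟩ := h
  have hk' : (y - y ^ 2) ^ (k + 1) = 0 := by rw [pow_succ, hk, zero_mul]
  obtain ⟨q, hq, he⟩ := exists_poly_sub_mul y k
  have hc : Commute (y - y ^ 2) q := hq.sub_left (hq.pow_left 2)
  refine ⟨1 - (1 - y ^ (k + 1)) ^ (k + 1), y - (1 - (1 - y ^ (k + 1)) ^ (k + 1)),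
    isIdempotentElem_one_sub_one_sub_pow_pow y (k + 1) hk', ?_, ?_, by abel⟩
  · rw [he]
    exact hc.isNilpotent_mul_right ⟨_, hk'⟩
  · have h1 : Commute (1 - (1 - y ^ (k + 1)) ^ (k + 1)) y :=
      (Commute.one_left y).sub_left
        (((Commute.one_left y).sub_left ((Commute.refl y).pow_left _)).pow_left _)
    exact h1.sub_right (Commute.refl _)

lemma isUnit_of_map_of_nil {R S : Type*} [Ring R] [Ring S] (f : R →+* S)
    (hf : Function.Surjective f) (hk : ∀ x, f x = 0 → IsNilpotent x) {a : R}
    (ha : IsUnit (f a)) : IsUnit a := by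
  obtain ⟨⟨_, w, h1, h2⟩, rfl⟩ := ha
  obtain ⟨b, rfl⟩ := hf w
  have hu : ∀ x y : R, f x * f y = 1 → IsUnit (x * y) := by
    intro x y h
    have : IsNilpotent (1 - x * y) := hk _ (by simp [h])
    simpa using this.isUnit_one_sub
  obtain ⟨u, hu1⟩ := hu a b h1
  obtain ⟨v, hv1⟩ := hu b a h2
  rw [isUnit_iff_exists_and_exists]
  refine ⟨⟨b * ↑u⁻¹, ?_⟩, ⟨↑v⁻¹ * b, ?_⟩⟩
  · rw [← mul_assoc, ← hu1, Units.mul_inv]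
  · rw [mul_assoc, ← hv1, Units.inv_mul]

lemma stronglyUnitNilClean_of_surjective {R S : Type*} [Ring R] [Ring S] (f : R →+* S)
    (hf : Function.Surjective f) (hk : ∀ x, f x = 0 → IsNilpotent x)
    (h : ∀ x : S, ∃ u : Sˣ, IsIdempotentElem ((u : S) * x)) : StronglyUnitNilClean R := by
  intro x
  obtain ⟨u, hu⟩ := h (f x)
  obtain ⟨v, hv⟩ := hf u
  obtain ⟨w, rfl⟩ := isUnit_of_map_of_nil f hf hk (hv ▸ u.isUnit : IsUnit (f v))
  refine ⟨w, isStronglyNilClean_of_isNilpotent_sub_sq (hk _ ?_)⟩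
  rw [map_sub, map_pow, map_mul, hv, pow_two, hu.eq, sub_self]

lemma StronglyUnitNilClean.map {R S : Type*} [Ring R] [Ring S] (f : R →+* S)
    (hf : Function.Surjective f) (h : StronglyUnitNilClean R) : StronglyUnitNilClean S := by
  intro y
  obtain ⟨x, rfl⟩ := hf y
  obtain ⟨u, e, b, he, hb, hc, hx⟩ := h x
  refine ⟨Units.map f.toMonoidHom u, f e, f b, he.map f, hb.map f, ?_, ?_⟩
  · rw [← map_mul, hc, map_mul]
  · rw [← map_add, ← hx, map_mul]; rfl

/-- Levitzki's theorem, in the form needed here: over a left noetherian ring, matrices with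
entries in a nil ideal are nilpotent. For a maximal ideal `W` among those over which all
matrices are nilpotent, an `a ∈ N \ W` with `{r | r * a ∈ W}` maximal would satisfy
`a * R * a ⊆ W`, and `W + R * a * R` would be larger. -/
lemma matrix_isNilpotent_of_nil {R : Type*} [Ring R] [IsNoetherianRing R] (N : Ideal R)
    [N.IsTwoSided] (hN : ∀ x ∈ N, IsNilpotent x) (n : ℕ) (A : Matrix (Fin n) (Fin n) R)
    (hA : ∀ i j, A i j ∈ N) : IsNilpotent A := by
  have wf : WellFounded ((· > ·) : Ideal R → Ideal R → Prop) := wellFounded_gt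
  obtain ⟨W, ⟨hW2, hWn⟩, hWmax⟩ := wf.has_min
    {I : Ideal R | I.IsTwoSided ∧
      ∀ A : Matrix (Fin n) (Fin n) R, (∀ i j, A i j ∈ I) → IsNilpotent A}
    ⟨⊥, inferInstance, fun A hA => by
      have : A = 0 := by ext i j; simpa using hA i j
      rw [this]; exact IsNilpotent.zero⟩
  by_cases hNW : N ≤ W
  · exact hWn A fun i j => hNW (hA i j)
  exfalso
  obtain ⟨b, hbN, hbW⟩ := Set.not_subset.1 hNW
  let L : R → Ideal R := fun a => Submodule.comap (LinearMap.toSpanSingleton R R a) W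
  have hL : ∀ a r, r ∈ L a ↔ r * a ∈ W := fun a r => by simp [L]
  obtain ⟨a, ⟨haN, haW⟩, hamax⟩ := (InvImage.wf L wf).has_min {a | a ∈ N ∧ a ∉ W} ⟨b, hbN, hbW⟩
  have hara : ∀ r, a * r * a ∈ W := by
    intro r
    by_cases h1 : a * r ∈ W
    · exact Ideal.mul_mem_right _ _ h1
    classical
    have hex : ∃ k, (a * r) ^ k ∈ W := by
      obtain ⟨k, hk⟩ := hN _ (Ideal.mul_mem_right r N haN)
      exact ⟨k, by rw [hk]; exact W.zero_mem⟩
    have hk := Nat.find_spec hex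
    have hmin := fun m => @Nat.find_min _ _ hex m
    generalize Nat.find hex = k at hk hmin
    rcases k with _ | _ | m
    · exact absurd (by simpa using W.mul_mem_left a hk) haW
    · exact absurd (by simpa using hk) h1
    have hc : (a * r) ^ (m + 1) ∉ W := hmin _ (by omega)
    have hcN : (a * r) ^ (m + 1) ∈ N := by
      rw [pow_succ']
      exact Ideal.mul_mem_right _ _ (Ideal.mul_mem_right _ _ haN)
    have hle : L a ≤ L ((a * r) ^ (m + 1)) := by
      intro x hx
      rw [hL] at hx ⊢
      rw [pow_succ', mul_assoc a, ← mul_assoc]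
      exact Ideal.mul_mem_right _ _ hx
    have heq : L a = L ((a * r) ^ (m + 1)) := by
      by_contra hne
      exact hamax _ ⟨hcN, hc⟩ (lt_of_le_of_ne hle hne)
    have : a * r ∈ L a := by
      rw [heq, hL, ← pow_succ']
      exact hk
    rwa [hL] at this
  let G : Set R := {x | x ∈ W ∨ ∃ r s, x = r * a * s}
  have hG : ∀ x ∈ G, ∀ t, x * t ∈ G := by
    rintro x (hx | ⟨r, s, rfl⟩) t
    · exact Or.inl (Ideal.mul_mem_right _ _ hx)
    · exact Or.inr ⟨r, s * t, by rw [mul_assoc (r * a)]⟩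
  have hGG : ∀ x ∈ G, ∀ y ∈ G, x * y ∈ W := by
    rintro x (hx | ⟨r, s, rfl⟩) y (hy | ⟨r', s', rfl⟩)
    · exact Ideal.mul_mem_right _ _ hx
    · exact Ideal.mul_mem_right _ _ hx
    · exact Ideal.mul_mem_left _ _ hy
    · have : r * a * s * (r' * a * s') = r * (a * (s * r') * a) * s' := by simp only [mul_assoc]
      rw [this]
      exact Ideal.mul_mem_right _ _ (Ideal.mul_mem_left _ _ (hara _))
  have hGt : ∀ x ∈ Ideal.span G, ∀ t, x * t ∈ Ideal.span G := by
    intro x hx t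
    induction hx using Submodule.span_induction with
    | mem x hx => exact Submodule.subset_span (hG x hx t)
    | zero => simp
    | add x y _ _ h1 h2 => rw [add_mul]; exact Submodule.add_mem _ h1 h2
    | smul c x _ h => rw [smul_eq_mul, mul_assoc]; exact Ideal.mul_mem_left _ _ h
  have hGs : ∀ x ∈ G, ∀ y ∈ Ideal.span G, x * y ∈ W := by
    intro x hx y hy
    induction hy using Submodule.span_induction generalizing x with
    | mem y hy => exact hGG x hx y hy
    | zero => simp
    | add y z _ _ h1 h2 => rw [mul_add]; exact Submodule.add_mem _ (h1 x hx) (h2 x hx)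
    | smul c y _ h => rw [smul_eq_mul, ← mul_assoc]; exact h _ (hG x hx c)
  have hss : ∀ x ∈ Ideal.span G, ∀ y ∈ Ideal.span G, x * y ∈ W := by
    intro x hx y hy
    induction hx using Submodule.span_induction with
    | mem x hx => exact hGs x hx y hy
    | zero => simp
    | add x z _ _ h1 h2 => rw [add_mul]; exact Submodule.add_mem _ h1 h2
    | smul c x _ h => rw [smul_eq_mul, mul_assoc]; exact Ideal.mul_mem_left _ _ h
  refine hWmax (Ideal.span G) ⟨⟨fun {x} t hx => hGt x hx t⟩, fun B hB => ?_⟩ ?_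
  · have h2 : IsNilpotent (B ^ 2) := by
      refine hWn _ fun i j => ?_
      rw [pow_two, Matrix.mul_apply]
      exact Submodule.sum_mem _ fun k _ => hss _ (hB _ _) _ (hB _ _)
    obtain ⟨k, hk⟩ := h2
    exact ⟨2 * k, by rw [pow_mul, hk]⟩
  · refine lt_of_le_of_ne (fun x hx => Submodule.subset_span (Or.inl hx)) fun h => haW ?_
    rw [h]
    exact Submodule.subset_span (Or.inr ⟨1, 1, by simp⟩)

lemma mul_eq_zero_comm_of_isReduced {S : Type*} [Ring S] [IsReduced S] {a b : S}
    (h : a * b = 0) : b * a = 0 := by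
  have : (b * a) ^ 2 = 0 := by
    rw [pow_two, mul_assoc, ← mul_assoc a, h, zero_mul, mul_zero]
  exact (pow_eq_zero_iff two_ne_zero).1 this

lemma mul_mul_eq_zero_of_isReduced {S : Type*} [Ring S] [IsReduced S] {a b : S}
    (h : a * b = 0) (r : S) : a * r * b = 0 := by
  have h1 : b * (a * r) = 0 := by
    rw [← mul_assoc, mul_eq_zero_comm_of_isReduced h, zero_mul]
  exact mul_eq_zero_comm_of_isReduced h1

/-- Idempotents of a reduced ring are central. -/
lemma IsIdempotentElem.commute_of_isReduced {S : Type*} [Ring S] [IsReduced S] {e : S}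
    (he : IsIdempotentElem e) (x : S) : Commute e x := by
  have h1 := mul_mul_eq_zero_of_isReduced he.mul_one_sub_self x
  have h2 := mul_mul_eq_zero_of_isReduced he.one_sub_mul_self x
  rw [mul_sub, mul_one, sub_eq_zero] at h1
  rw [sub_mul, one_mul, sub_mul, sub_eq_zero] at h2
  exact h1.trans h2.symm

/-- In a reduced left noetherian ring every element can be completed to a non-zero-divisor by
an element annihilating it: take `a + c` with maximal double annihilator. -/
lemma exists_add_regular {S : Type*} [Ring S] [IsReduced S] [IsNoetherianRing S] (a : S) :
    ∃ c, a * c = 0 ∧ ∀ y, y * (a + c) = 0 → y = 0 := by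
  have wf : WellFounded ((· > ·) : Ideal S → Ideal S → Prop) := wellFounded_gt
  -- `L b` is the double annihilator of `b`.
  let L : S → Ideal S := fun b =>
    { carrier := {x | ∀ y, y * b = 0 → x * y = 0}
      zero_mem' := fun y _ => zero_mul y
      add_mem' := fun {u v} hu hv y hy => by rw [add_mul, hu y hy, hv y hy, add_zero]
      smul_mem' := fun c x hx y hy => by rw [smul_eq_mul, mul_assoc, hx y hy, mul_zero] }
  obtain ⟨b, ⟨c, rfl, hac⟩, hmax⟩ := (InvImage.wf L wf).has_min
    {b | ∃ c, b = a + c ∧ a * c = 0} ⟨a, 0, by simp, by simp⟩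
  -- For orthogonal summands, the annihilator of the sum is the intersection of annihilators.
  have split : ∀ p q : S, p * q = 0 → ∀ y, y * (p + q) = 0 → y * p = 0 ∧ y * q = 0 := by
    intro p q hpq y hy
    have h1 : y * p * p = 0 := by
      have := congrArg (· * p) hy
      simpa [mul_add, add_mul, mul_assoc, mul_eq_zero_comm_of_isReduced hpq] using this
    have h2 : y * p = 0 := by
      have h3 := mul_mul_eq_zero_of_isReduced h1 y
      have h4 : (y * p) ^ 2 = 0 := by
        rw [pow_two, ← mul_assoc]; exact h3
      exact (pow_eq_zero_iff two_ne_zero).1 h4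
    exact ⟨h2, by rwa [mul_add, h2, zero_add] at hy⟩
  refine ⟨c, hac, fun d hd => ?_⟩
  by_contra hd0
  obtain ⟨hda, hdc⟩ := split a c hac d hd
  have hbd : (a + c) * d = 0 := mul_eq_zero_comm_of_isReduced hd
  refine hmax (a + c + d) ⟨c + d, by abel, by
    rw [mul_add, hac, mul_eq_zero_comm_of_isReduced hda, add_zero]⟩ ?_
  refine lt_of_le_of_ne (fun x hx y hy => hx y (split _ _ hbd y hy).1) fun h => hd0 ?_
  have hdL : d ∈ L (a + c + d) := fun y hy =>
    mul_eq_zero_comm_of_isReduced (split _ _ hbd y hy).2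
  rw [← h] at hdL
  have h2 : d ^ 2 = 0 := by rw [pow_two]; exact hdL d hd
  exact (pow_eq_zero_iff two_ne_zero).1 h2

/-- If `x` is a non-zero-divisor and `u * x = e + b` is strongly nil-clean, then
`(e + b) ^ k * (1 - e) = b ^ k * (1 - e)` vanishes for large `k`, so `e = 1`. -/
lemma isUnit_of_regular_of_isStronglyNilClean {T : Type*} [Ring T] {x : T} (u : Tˣ)
    (h : IsStronglyNilClean ((u : T) * x)) (hx : ∀ y, x * y = 0 → y = 0) : IsUnit x := by
  obtain ⟨e, b, he, ⟨k, hk⟩, hc, hux⟩ := h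
  have hreg : ∀ k y, ((u : T) * x) ^ k * y = 0 → y = 0 := by
    intro k
    induction k with
    | zero => simp
    | succ k ih =>
      intro y hy
      rw [pow_succ, mul_assoc] at hy
      have h1 := ih _ hy
      rw [mul_assoc, Units.mul_right_eq_zero] at h1
      exact hx y h1
  have hpow : ∀ k, ((u : T) * x) ^ k * (1 - e) = b ^ k * (1 - e) := by
    intro k
    induction k with
    | zero => simp
    | succ k ih =>
      have hb : Commute b (1 - e) := (Commute.one_right b).sub_right hc.symm
      have h1 : (e + b) * (1 - e) = (1 - e) * b := by
        rw [add_mul, he.mul_one_sub_self, zero_add, hb.eq]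
      rw [pow_succ, mul_assoc, hux, h1, ← hux, ← mul_assoc, ih, mul_assoc, ← hb.eq, ← mul_assoc,
        ← pow_succ]
  have h1 : 1 - e = 0 := hreg k _ (by rw [hpow, hk, zero_mul])
  have h2 : IsUnit ((u : T) * x) := by
    rw [hux, ← sub_eq_zero.1 h1]
    exact IsNilpotent.isUnit_one_add ⟨k, hk⟩
  simpa using h2

lemma exists_unit_mul_idempotent_of_matrix {S : Type*} [Ring S] [IsReduced S]
    [IsNoetherianRing S] {n : ℕ} (hn : 1 ≤ n)
    (h : StronglyUnitNilClean (Matrix (Fin n) (Fin n) S)) (a : S) :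
    ∃ u : Sˣ, IsIdempotentElem ((u : S) * a) := by
  obtain ⟨c, hac, hreg⟩ := exists_add_regular a
  have hunit : IsUnit (a + c) := by
    obtain ⟨U, hU⟩ := h (Matrix.scalar (Fin n) (a + c))
    have hM : IsUnit (Matrix.scalar (Fin n) (a + c)) := by
      refine isUnit_of_regular_of_isStronglyNilClean U hU fun Y hY => ?_
      ext i j
      have := congrFun (congrFun hY i) j
      simp only [Matrix.scalar_apply, Matrix.diagonal_mul, Matrix.zero_apply] at this
      exact hreg _ (mul_eq_zero_comm_of_isReduced this)
    obtain ⟨⟨_, B, h1, h2⟩, rfl⟩ := hM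
    let i : Fin n := ⟨0, hn⟩
    have h1 := congrFun (congrFun h1 i) i
    have h2 := congrFun (congrFun h2 i) i
    simp only [Matrix.scalar_apply, Matrix.diagonal_mul, Matrix.mul_diagonal,
      Matrix.one_apply_eq] at h1 h2
    exact ⟨⟨a + c, B i i, h1, h2⟩, rfl⟩
  obtain ⟨v, hv⟩ := hunit
  have hva : (v : S) * a = a * a := by
    rw [hv, add_mul, mul_eq_zero_comm_of_isReduced hac, add_zero]
  have hav : a * (v : S) = a * a := by rw [hv, mul_add, hac, add_zero]
  have hcomm : Commute (↑v⁻¹ : S) a := Commute.units_inv_left (hva.trans hav.symm)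
  refine ⟨v⁻¹, ?_⟩
  show _ * _ = _
  rw [hcomm.eq, mul_assoc, ← mul_assoc _ a, hcomm.eq, ← mul_assoc, ← mul_assoc, ← hva, mul_assoc,
    mul_assoc, ← mul_assoc a, ← hcomm.eq, mul_assoc, ← hcomm.eq]
  simp [← mul_assoc]

/-- The noetherian condition yields a largest left ideal generated by a (central) idempotent
inside a given left ideal `I`, and it has to be all of `I`. -/
lemma isSemisimpleRing_of_unit_mul_idempotent {S : Type*} [Ring S] [IsReduced S]
    [IsNoetherianRing S] (h : ∀ x : S, ∃ u : Sˣ, IsIdempotentElem ((u : S) * x)) :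
    IsSemisimpleRing S := by
  have wf : WellFounded ((· > ·) : Ideal S → Ideal S → Prop) := wellFounded_gt
  refine (isSemisimpleModule_iff S S).2 ⟨fun (I : Ideal S) => ?_⟩
  obtain ⟨e, ⟨he, heI⟩, hmax⟩ := (InvImage.wf (fun e : S => Ideal.span {e}) wf).has_min
    {e | IsIdempotentElem e ∧ e ∈ I} ⟨0, IsIdempotentElem.zero, I.zero_mem⟩
  have hI : ∀ x ∈ I, x * e = x := by
    intro x hx
    obtain ⟨u, hu⟩ := h x
    obtain ⟨f, hf⟩ : ∃ f, f = (u : S) * x := ⟨_, rfl⟩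
    rw [← hf] at hu
    have hfI : f ∈ I := hf ▸ Ideal.mul_mem_left I _ hx
    have hef : Commute e f := he.commute_of_isReduced f
    have hge : e * (e + f - e * f) = e := by
      rw [mul_sub, mul_add, ← mul_assoc, he.eq]; abel
    have hgf : f * (e + f - e * f) = f := by
      rw [mul_sub, mul_add, ← mul_assoc, hu.eq, ← hef.eq, mul_assoc, hu.eq]; abel
    have hg : IsIdempotentElem (e + f - e * f) := by
      show _ * _ = _
      rw [sub_mul, add_mul, mul_assoc e, hgf, hge]
    have hle : Ideal.span {e} ≤ Ideal.span {e + f - e * f} := by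
      rw [Ideal.span_singleton_le_iff_mem, Ideal.mem_span_singleton']
      exact ⟨e, hge⟩
    have heq : Ideal.span {e} = Ideal.span {e + f - e * f} := by
      by_contra hne
      exact hmax _ ⟨hg, I.sub_mem (I.add_mem heI hfI) (Ideal.mul_mem_left I _ hfI)⟩
        (lt_of_le_of_ne hle hne)
    have hfe : f ∈ Ideal.span {e} := by
      rw [heq, Ideal.mem_span_singleton']
      exact ⟨f, hgf⟩
    obtain ⟨t, ht⟩ := Ideal.mem_span_singleton'.1 hfe
    have h1 : f * e = f := by rw [← ht, mul_assoc, he.eq]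
    rw [hf, mul_assoc] at h1
    exact u.isUnit.mul_left_cancel h1
  refine ⟨Ideal.span {1 - e}, ?_, ?_⟩
  · rw [Submodule.disjoint_def]
    intro x hx hx'
    obtain ⟨t, rfl⟩ := Ideal.mem_span_singleton'.1 hx'
    rw [← hI _ hx, mul_assoc, he.one_sub_mul_self, mul_zero]
  · rw [codisjoint_iff, Ideal.eq_top_iff_one]
    have := Submodule.add_mem_sup heI (Ideal.mem_span_singleton_self (1 - e))
    rwa [add_sub_cancel] at this

/-- Endomorphism rings of finite-dimensional spaces over division rings are unit-regular:
`ker f` and a complement of `range f` have the same dimension. -/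
lemma exists_equiv_comp_eq {D V : Type*} [DivisionRing D] [AddCommGroup V] [Module D V]
    [FiniteDimensional D V] (f : V →ₗ[D] V) : ∃ u : V ≃ₗ[D] V, ∀ x, f (u (f x)) = f x := by
  obtain ⟨C, hC⟩ := Submodule.exists_isCompl (LinearMap.ker f)
  obtain ⟨T, hT⟩ := Submodule.exists_isCompl (LinearMap.range f)
  have hfin : Module.finrank D T = Module.finrank D (LinearMap.ker f) := by
    have h1 := f.finrank_range_add_finrank_ker
    have h2 := Submodule.finrank_add_eq_of_isCompl hT
    omega
  let φ : C ≃ₗ[D] LinearMap.range f :=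
    (Submodule.quotientEquivOfIsCompl _ C hC).symm ≪≫ₗ f.quotKerEquivRange
  have hφ : ∀ c : C, ((φ c : LinearMap.range f) : V) = f c := fun c => by
    simp [φ, LinearMap.quotKerEquivRange_apply_mk]
  let ψ : T ≃ₗ[D] LinearMap.ker f := LinearEquiv.ofFinrankEq _ _ hfin
  refine ⟨(Submodule.prodEquivOfIsCompl _ _ hT).symm ≪≫ₗ (φ.symm.prodCongr ψ) ≪≫ₗ
    Submodule.prodEquivOfIsCompl _ _ hC.symm, fun x => ?_⟩
  have h1 : (Submodule.prodEquivOfIsCompl _ _ hT).symm (f x)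
      = ((⟨f x, LinearMap.mem_range_self f x⟩ : LinearMap.range f), 0) :=
    Submodule.prodEquivOfIsCompl_symm_apply_left _ _ hT
      (⟨f x, LinearMap.mem_range_self f x⟩ : LinearMap.range f)
  simp only [LinearEquiv.trans_apply, h1, LinearEquiv.prodCongr_apply, map_zero]
  simp [← hφ]

lemma exists_unit_mul_idempotent_matrix_divisionRing {D : Type*} [DivisionRing D] {n : ℕ}
    (A : Matrix (Fin n) (Fin n) D) :
    ∃ U : (Matrix (Fin n) (Fin n) D)ˣ, IsIdempotentElem ((U : Matrix (Fin n) (Fin n) D) * A) := by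
  obtain ⟨u, hu⟩ := exists_equiv_comp_eq (Matrix.toLinearMapRight' A)
  refine ⟨⟨LinearMap.toMatrixRight' (u : (Fin n → D) →ₗ[D] (Fin n → D)),
    LinearMap.toMatrixRight' (u.symm : (Fin n → D) →ₗ[D] (Fin n → D)), ?_, ?_⟩, ?_⟩
  · rw [← LinearMap.toMatrixRight'_comp]; simp
  · rw [← LinearMap.toMatrixRight'_comp]; simp
  · show _ * _ = _
    apply Matrix.toLinearMapRight'.injective
    refine LinearMap.ext fun x => ?_
    simp only [Matrix.toLinearMapRight'_mul_apply,
      LinearEquiv.symm_apply_apply]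
    exact hu _

lemma exists_unit_mul_idempotent_of_isSemisimpleRing {S : Type*} [Ring S] [IsSemisimpleRing S]
    (a : S) : ∃ u : Sˣ, IsIdempotentElem ((u : S) * a) := by
  obtain ⟨k, D, d, _, _, ⟨e⟩⟩ := IsSemisimpleRing.exists_ringEquiv_pi_matrix_divisionRing S
  choose U hU using fun i => exists_unit_mul_idempotent_matrix_divisionRing (e a i)
  let V : (∀ i, Matrix (Fin (d i)) (Fin (d i)) (D i))ˣ := MulEquiv.piUnits.symm U
  refine ⟨Units.map e.symm.toMonoidHom V, ?_⟩
  have h1 : ((Units.map e.symm.toMonoidHom V : Sˣ) : S) * a = e.symm (V * e a) := by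
    rw [map_mul, e.symm_apply_apply]; rfl
  rw [h1]
  refine IsIdempotentElem.map ?_ e.symm
  show _ * _ = _
  funext i
  exact hU i

theorem matrix_stronglyUnitNilClean_iff_of_noetherian_NI
    (R : Type*) [Ring R] [IsNoetherianRing R] (hNI : IsNIRing R) (n : ℕ) (hn : 1 ≤ n) :
    StronglyUnitNilClean (Matrix (Fin n) (Fin n) R) ↔ StronglyUnitNilClean R := by
  obtain ⟨I, hI⟩ := hNI
  let N : Ideal R := I.asIdeal
  have hN : ∀ x, x ∈ N ↔ IsNilpotent x := fun x => TwoSidedIdeal.mem_asIdeal.trans (hI x)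
  let f : R →+* R ⧸ N := Ideal.Quotient.mk N
  have hf : Function.Surjective f := Ideal.Quotient.mk_surjective
  have hker : ∀ x, f x = 0 ↔ IsNilpotent x := fun x => Ideal.Quotient.eq_zero_iff_mem.trans (hN x)
  have hnoeth : IsNoetherianRing (R ⧸ N) := isNoetherianRing_of_surjective R _ f hf
  have hred : IsReduced (R ⧸ N) := by
    refine ⟨fun y ⟨k, hk⟩ => ?_⟩
    obtain ⟨x, rfl⟩ := hf y
    rw [← map_pow, hker] at hk
    obtain ⟨m, hm⟩ := hk
    exact (hker x).2 ⟨k * m, by rw [pow_mul, hm]⟩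
  have hmf : Function.Surjective (f.mapMatrix (m := Fin n)) := by
    intro B
    choose g hg using hf
    exact ⟨B.map g, by ext i j; simp [hg]⟩
  constructor
  · intro h
    exact stronglyUnitNilClean_of_surjective f hf (fun x => (hker x).1)
      (exists_unit_mul_idempotent_of_matrix hn (h.map f.mapMatrix hmf))
  · intro h
    have : IsSemisimpleRing (R ⧸ N) := by
      refine isSemisimpleRing_of_unit_mul_idempotent fun x => ?_
      obtain ⟨u, e, b, he, hb, -, hx⟩ := h.map f hf x
      refine ⟨u, ?_⟩
      rw [hx, hb.eq_zero, add_zero]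
      exact he
    refine stronglyUnitNilClean_of_surjective (f.mapMatrix (m := Fin n)) hmf (fun A hA => ?_)
      exists_unit_mul_idempotent_of_isSemisimpleRing
    refine matrix_isNilpotent_of_nil N (fun x => (hN x).1) n A fun i j => ?_
    have := congrFun (congrFun hA i) j
    exact Ideal.Quotient.eq_zero_iff_mem.1 this
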